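/- The function h defined on [0, 1) by h(s) = √(1 − s) · ∑_{k=0}^∞ s^k/√(4k + 1) is strictly decreasing on (0, 1). -/

import Mathlib

/-- The function `h s = √(1 - s) · ∑ₖ sᵏ / √(4k + 1)`. -/
noncomputable def hFun (s : ℝ) : ℝ :=
  Real.sqrt (1 - s) * ∑' k : ℕ, s ^ k / Real.sqrt (4 * (k : ℝ) + 1)

noncomputable def aCoef (k : ℕ) : ℝ := 1 / Real.sqrt (4 * (k : ℝ) + 1)

lemma aCoef_pos (k : ℕ) : 0 < aCoef k := by unfold aCoef; positivity

lemma aCoef_le (k : ℕ) : aCoef k ≤ 1 := by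
  unfold aCoef
  rw [div_le_one (by positivity)]
  apply Real.one_le_sqrt.2
  have : (0:ℝ) ≤ k := by positivity
  linarith

lemma aCoef_step (k : ℕ) : (2 * k + 2) * aCoef (k + 1) < (2 * k + 1) * aCoef k := by
  unfold aCoef
  have hk : (0:ℝ) ≤ k := by positivity
  rw [mul_one_div, mul_one_div, div_lt_div_iff₀ (by positivity) (by positivity)]
  apply lt_of_pow_lt_pow_left₀ 2 (by positivity)
  rw [mul_pow, mul_pow, Real.sq_sqrt (by positivity), Real.sq_sqrt (by positivity)]
  push_cast
  nlinarith

lemma summable_bound {r : ℝ} (h0 : 0 ≤ r) (h1 : r < 1) :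
    Summable (fun k : ℕ => (k : ℝ) * r ^ (k - 1)) := by
  rw [← summable_nat_add_iff 1]
  have e1 := summable_pow_mul_geometric_of_norm_lt_one (R := ℝ) 1 (r := r)
    (by rwa [Real.norm_of_nonneg h0])
  have e2 := summable_geometric_of_lt_one h0 h1
  refine (e1.add e2).congr fun k => ?_
  simp
  ring

lemma summable_coef {s : ℝ} (h0 : 0 ≤ s) (h1 : s < 1) :
    Summable (fun k : ℕ => aCoef k * s ^ k) :=
  Summable.of_nonneg_of_le (fun k => mul_nonneg (aCoef_pos k).le (by positivity))
    (fun k => mul_le_of_le_one_left (by positivity) (aCoef_le k))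
    (summable_geometric_of_lt_one h0 h1)

lemma summable_deriv {s : ℝ} (h0 : 0 ≤ s) (h1 : s < 1) :
    Summable (fun k : ℕ => aCoef k * (k * s ^ (k - 1))) :=
  Summable.of_nonneg_of_le (fun k => mul_nonneg (aCoef_pos k).le (by positivity))
    (fun k => mul_le_of_le_one_left (by positivity) (aCoef_le k))
    (summable_bound h0 h1)

lemma hasDerivAt_series {s : ℝ} (h0 : 0 < s) (h1 : s < 1) :
    HasDerivAt (fun y : ℝ => ∑' k : ℕ, aCoef k * y ^ k)
      (∑' k : ℕ, aCoef k * (k * s ^ (k - 1))) s := by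
  obtain ⟨r, hsr, hr⟩ := exists_between h1
  have hr0 : 0 < r := h0.trans hsr
  refine hasDerivAt_tsum_of_isPreconnected (t := Set.Ioo 0 r) (y₀ := s)
    (g := fun (k : ℕ) (y : ℝ) => aCoef k * y ^ k)
    (g' := fun (k : ℕ) (y : ℝ) => aCoef k * (k * y ^ (k - 1)))
    (summable_bound hr0.le hr) isOpen_Ioo isPreconnected_Ioo
    (fun k y _ => (hasDerivAt_pow k y).const_mul _) (fun k y hy => ?_) ⟨h0, hsr⟩
    (summable_coef h0.le h1) ⟨h0, hsr⟩
  have hy0 := hy.1.le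
  rw [Real.norm_of_nonneg (mul_nonneg (aCoef_pos k).le (by positivity))]
  refine (mul_le_of_le_one_left (by positivity) (aCoef_le k)).trans ?_
  have := hy.2.le
  gcongr

lemma series_ineq {s : ℝ} (h0 : 0 < s) (h1 : s < 1) :
    2 * (1 - s) * (∑' k : ℕ, aCoef k * (k * s ^ (k - 1)))
      - (∑' k : ℕ, aCoef k * s ^ k) < 0 := by
  have S := summable_coef h0.le h1
  have D := summable_deriv h0.le h1
  have D1 := (summable_nat_add_iff 1).2 D
  have e : (∑' k : ℕ, aCoef k * (k * s ^ (k - 1)))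
      = ∑' k : ℕ, aCoef (k + 1) * (((k + 1 : ℕ) : ℝ) * s ^ (k + 1 - 1)) := by
    rw [D.tsum_eq_zero_add]; simp
  have H1 := D1.hasSum.mul_left 2
  rw [← e] at H1
  have H2 := D.hasSum.mul_left (2 * s)
  have H := (H2.add S.hasSum).sub H1
  have key : ∀ k : ℕ, 0 < 2 * s * (aCoef k * (k * s ^ (k - 1))) + aCoef k * s ^ k
      - 2 * (aCoef (k + 1) * (((k + 1 : ℕ) : ℝ) * s ^ (k + 1 - 1))) := by
    intro k
    have e2 : (k : ℝ) * s ^ (k - 1) * s = k * s ^ k := by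
      cases k with
      | zero => simp
      | succ n => simp [pow_succ, mul_assoc]
    have := mul_pos (sub_pos.2 (aCoef_step k)) (pow_pos h0 k)
    have e3 : 2 * s * (aCoef k * (k * s ^ (k - 1))) = 2 * aCoef k * (k * s ^ k) := by
      rw [← e2]; ring
    rw [e3, Nat.add_sub_cancel]
    push_cast
    linarith
  have P := H.summable.tsum_pos (fun k : ℕ => (key k).le) 0 (key 0)
  rw [H.tsum_eq] at P
  linarith

theorem hFun_strictAntiOn : StrictAntiOn hFun (Set.Ioo (0 : ℝ) 1) := by
  have hf : hFun = fun s => Real.sqrt (1 - s) * ∑' k : ℕ, aCoef k * s ^ k := by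
    funext s
    unfold hFun aCoef
    congr 1
    refine tsum_congr fun k => ?_
    ring
  have hd : ∀ s ∈ Set.Ioo (0 : ℝ) 1, ∃ d : ℝ, d < 0 ∧ HasDerivAt hFun d s := by
    intro s hs
    have hp : 0 < 1 - s := sub_pos.2 hs.2
    have hq := Real.sqrt_pos.2 hp
    have h1 : HasDerivAt (fun y : ℝ => Real.sqrt (1 - y)) (-1 / (2 * Real.sqrt (1 - s))) s :=
      ((hasDerivAt_id s).const_sub 1).sqrt hp.ne'
    rw [hf]
    refine ⟨_, ?_, h1.mul (hasDerivAt_series hs.1 hs.2)⟩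
    have I := series_ineq hs.1 hs.2
    have := div_neg_of_neg_of_pos I (by positivity : 0 < 2 * Real.sqrt (1 - s))
    refine lt_of_eq_of_lt ?_ this
    have q2 := Real.sq_sqrt hp.le
    generalize (∑' k : ℕ, aCoef k * (k * s ^ (k - 1))) = A
    generalize (∑' k : ℕ, aCoef k * s ^ k) = B
    generalize Real.sqrt (1 - s) = q at *
    rw [← q2]
    field_simp
    ring
  refine strictAntiOn_of_deriv_neg (convex_Ioo 0 1) (fun s hs => ?_) (fun s hs => ?_)
  · obtain ⟨d, _, h⟩ := hd s hs
    exact h.continuousAt.continuousWithinAt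
  · rw [interior_Ioo] at hs
    obtain ⟨d, h0, h⟩ := hd s hs
    rwa [h.deriv]
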